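/- arXiv:1209.5277 — 5 statements merged into one kernel-verified Lean document; each statement's English description precedes it below -/
import Mathlib

section
/- Assume α_0 is neither zero nor a negative integer and no other α_i is a negative integer. Then for every x ∈ ℂ∖{0}, D_μ j_μ(x) = (r α_0 / x) · j_{μ−1}(x), where μ−1 = (α_0 − 1, α_1, …, α_{r−1}). -/
open Complex MeasureTheory Real Filter Topology

noncomputable section

/-- ω = exp(2πi/r) -/
def om (r : ℕ) : ℂ := Complex.exp (2 * Real.pi * Complex.I / r)

/-- θ = exp(iπ/r) -/
def th (r : ℕ) : ℂ := Complex.exp (Real.pi * Complex.I / r)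

/-- projector T_k -/
def Tk (r k : ℕ) (g : ℂ → ℂ) (x : ℂ) : ℂ :=
  (r : ℂ)⁻¹ * ∑ n ∈ Finset.range r, om r ^ (k * n) * g (om r ^ n * x)

/-- L_a f = f' + (a/x) f -/
def Lop (a : ℝ) (f : ℂ → ℂ) (x : ℂ) : ℂ := deriv f x + (a / x) * f x

/-- a_k = r α_k + k -/
def acoef (r : ℕ) (α : ℕ → ℝ) (k : ℕ) : ℝ := r * α k + k

/-- Δ_μ = L_{a_{r-1}} ∘ ⋯ ∘ L_{a_0} -/
def Delta (r : ℕ) (α : ℕ → ℝ) (f : ℂ → ℂ) : ℂ → ℂ :=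
  (List.range r).foldl (fun g i => Lop (acoef r α i) g) f

/-- D_μ -/
def Dop (r : ℕ) (α : ℕ → ℝ) (f : ℂ → ℂ) (x : ℂ) : ℂ :=
  deriv f x + (1 / x) * ∑ k ∈ Finset.range r, ((acoef r α k : ℝ) : ℂ) * Tk r k f x

/-- Pochhammer symbol (β)_n -/
def poch (β : ℝ) (n : ℕ) : ℝ := (ascPochhammer ℝ n).eval β

/-- Bessel function of vector index -/
def jmu (r : ℕ) (α : ℕ → ℝ) (z : ℂ) : ℂ :=
  ∑' n : ℕ, (-1 : ℂ) ^ n * z ^ (n * r) /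
    ((∏ i ∈ Finset.range r, ((poch (α i + 1) n : ℝ) : ℂ)) * (r : ℂ) ^ (n * r))

/-- r-Dunkl kernel -/
def Emu (r : ℕ) (α : ℕ → ℝ) (z : ℂ) : ℂ :=
  ∑ k ∈ Finset.range r, th r ^ (-(k : ℤ)) * (Dop r α)^[k] (jmu r α) z

/-- generalized cosine -/
def cosr (r : ℕ) (z : ℂ) : ℂ :=
  ∑' n : ℕ, (-1 : ℂ) ^ n * z ^ (n * r) /
    ((∏ i ∈ Finset.range r, ((poch (1 - (i : ℝ) / r) n : ℝ) : ℂ)) * (r : ℂ) ^ (n * r))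

/-- weight w_μ on [0,1]^r -/
def wmu (r : ℕ) (α : ℕ → ℝ) (u : Fin r → ℝ) : ℝ :=
  ∏ i : Fin r, (1 - u i ^ r) ^ (α i.1 + (i.1 : ℝ) / r - 1) * u i ^ (r - (i.1 + 1))

/-- constant c_μ -/
def cmu (r : ℕ) (α : ℕ → ℝ) : ℝ :=
  ∏ i ∈ Finset.range r,
    r * Real.Gamma (α i + 1) / (Real.Gamma (α i + (i : ℝ) / r) * Real.Gamma (1 - (i : ℝ) / r))

/-- L_{a_{k-1}} ∘ ⋯ ∘ L_{a_0} -/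
def Lcomp (r : ℕ) (α : ℕ → ℝ) (k : ℕ) (f : ℂ → ℂ) : ℂ → ℂ :=
  (List.range k).foldl (fun g i => Lop (acoef r α i) g) f

/-- r-Riemann–Liouville on the half line -/
def Rop (r : ℕ) (a : ℝ) (g : ℝ → ℂ) (x : ℝ) : ℂ :=
  ∫ t in (0:ℝ)..1, g (x * t) * (((1 - t ^ r) ^ (a - 1) : ℝ) : ℂ)

/-- r-Riemann–Liouville along rays in ℂ -/
def RopC (r : ℕ) (a : ℝ) (f : ℂ → ℂ) (z : ℂ) : ℂ :=
  ∫ t in (0:ℝ)..1, f (z * t) * (((1 - t ^ r) ^ (a - 1) : ℝ) : ℂ)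

/-- the operator M h = (1/(r x^{r-1})) h' -/
def Mop (r : ℕ) (h : ℝ → ℂ) (x : ℝ) : ℂ := ((1 / (r * x ^ (r - 1)) : ℝ) : ℂ) * deriv h x

/-- hermitian product ⟨f,g⟩_a -/
def inr (r : ℕ) (a : ℝ) (f g : ℂ → ℂ) : ℂ :=
  ∫ t in Set.Ioi (0:ℝ),
    (∑ m ∈ Finset.range r, f (om r ^ m * t) * (starRingEnd ℂ) (g (om r ^ m * t))) *
      ((t ^ a : ℝ) : ℂ)

/-- transmutation operator V_μ -/
def Vmu (r : ℕ) (α : ℕ → ℝ) (h : ℂ → ℂ) (x : ℂ) : ℂ :=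
  (cmu r α : ℂ) *
    ∫ u in Set.univ.pi (fun _ : Fin r => Set.Icc (0:ℝ) 1),
      (Tk r 0 (fun z => h (z * ∏ i, (u i : ℂ))) x +
        ∑ k ∈ Finset.Ico 1 r,
          th r ^ (-(k : ℤ)) * Tk r k (Lcomp r α k (fun z => h (z * ∏ i, (u i : ℂ)))) x) *
        ((wmu r α u : ℝ) : ℂ)

/-!
The function `jmu r α` is a power series in `z ^ r`, hence invariant under `z ↦ ω z`. On such
functions `T_0` is the identity and `T_k` vanishes for `0 < k < r`, so there `x D_μ` reduces to
`x d/dx + r α_0`. This operator multiplies the `n`-th term of the series by `r (α_0 + n)`, and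
`(α_0 + n) / (α_0 + 1)_n = α_0 / (α_0)_n` turns the result into `r α_0` times the series of
index `μ - 1`.
-/

theorem poch_succ (b : ℝ) (n : ℕ) : poch b (n + 1) = poch b n * (b + n) :=
  ascPochhammer_succ_eval n b

theorem poch_succ_left (b : ℝ) (n : ℕ) : poch b (n + 1) = b * poch (b + 1) n := by
  simp [poch, ascPochhammer_succ_left]

theorem poch_ne_zero {b : ℝ} (hb : ∀ n : ℕ, b ≠ -n) (n : ℕ) : poch b n ≠ 0 := by
  rw [poch, Ne, ascPochhammer_eval_eq_zero_iff]
  rintro ⟨m, -, hm⟩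
  exact hb m (by rw [hm, neg_neg])

theorem add_div_poch_add_one {b : ℝ} (hb : ∀ n : ℕ, b ≠ -n) (n : ℕ) :
    (b + n) / poch (b + 1) n = b / poch b n := by
  have hb' : poch (b + 1) n ≠ 0 :=
    right_ne_zero_of_mul (poch_succ_left b n ▸ poch_ne_zero hb (n + 1))
  rw [div_eq_div_iff hb' (poch_ne_zero hb n), ← poch_succ_left, poch_succ, mul_comm]

theorem summable_of_succ_eq_mul_of_tendsto_zero {R : Type*} [NormedRing R] [CompleteSpace R]
    {f ρ : ℕ → R} (hf : ∀ n, f (n + 1) = f n * ρ n) (hρ : Tendsto ρ atTop (𝓝 0)) :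
    Summable f := by
  have hρ_le : ∀ᶠ n in atTop, ‖ρ n‖ ≤ 1 / 2 :=
    hρ.norm.eventually_le_const (by norm_num)
  refine summable_of_ratio_norm_eventually_le (r := 1 / 2) (by norm_num) ?_
  filter_upwards [hρ_le] with n hn
  calc ‖f (n + 1)‖ ≤ ‖f n‖ * ‖ρ n‖ := hf n ▸ norm_mul_le _ _
    _ ≤ ‖f n‖ * (1 / 2) := by gcongr
    _ = 1 / 2 * ‖f n‖ := mul_comm _ _

theorem mul_deriv_const_mul_pow (c x : ℂ) (m : ℕ) :
    x * deriv (fun z ↦ c * z ^ m) x = m * (c * x ^ m) := by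
  rw [deriv_const_mul_field, deriv_pow_field]
  cases m with
  | zero => simp
  | succ m => rw [Nat.add_sub_cancel]; ring

theorem hasSum_mul_deriv_of_hasSum_pow {ι : Type*} {c : ι → ℂ} {e : ι → ℕ} {f : ℂ → ℂ}
    (hf : ∀ z, HasSum (fun n ↦ c n * z ^ e n) (f z)) (x : ℂ) :
    HasSum (fun n ↦ e n * (c n * x ^ e n)) (x * deriv f x) := by
  have hbound : Summable fun n ↦ ‖c n‖ * (‖x‖ + 1) ^ e n := by
    have hR : ‖((‖x‖ + 1 : ℝ) : ℂ)‖ = ‖x‖ + 1 := Complex.norm_of_nonneg (by positivity)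
    simpa only [norm_mul, norm_pow, hR] using (hf ((‖x‖ + 1 : ℝ) : ℂ)).summable.norm
  have hderiv : HasSum (fun n ↦ deriv (fun z ↦ c n * z ^ e n) x)
      (deriv (fun z ↦ ∑' n, c n * z ^ e n) x) := by
    refine hasSum_deriv_of_summable_norm (U := Metric.ball 0 (‖x‖ + 1)) hbound
      (fun n ↦ by fun_prop) Metric.isOpen_ball (fun n w hw ↦ ?_) (by simp)
    rw [norm_mul, norm_pow]
    gcongr
    exact (mem_ball_zero_iff.1 hw).le
  have hf_tsum : f = fun z ↦ ∑' n, c n * z ^ e n := funext fun z ↦ (hf z).tsum_eq.symm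
  simpa only [← hf_tsum, mul_deriv_const_mul_pow] using hderiv.mul_left x

theorem isPrimitiveRoot_om {r : ℕ} (hr : r ≠ 0) : IsPrimitiveRoot (om r) r :=
  Complex.isPrimitiveRoot_exp r hr

section RotationInvariant

variable {r : ℕ} {f : ℂ → ℂ}

theorem apply_om_pow_mul (hf : ∀ z, f (om r * z) = f z) (n : ℕ) (x : ℂ) :
    f (om r ^ n * x) = f x := by
  induction n with
  | zero => rw [pow_zero, one_mul]
  | succ n ih => rw [pow_succ', mul_assoc, hf, ih]

theorem Tk_zero_of_invariant (hr : r ≠ 0) (hf : ∀ z, f (om r * z) = f z) (x : ℂ) :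
    Tk r 0 f x = f x := by
  simp [Tk, apply_om_pow_mul hf, hr]

theorem Tk_eq_zero_of_invariant (hf : ∀ z, f (om r * z) = f z) {k : ℕ} (hk : k ≠ 0)
    (hkr : k < r) (x : ℂ) : Tk r k f x = 0 := by
  have hom := isPrimitiveRoot_om (Nat.ne_zero_of_lt hkr)
  have hsum : ∑ n ∈ Finset.range r, om r ^ (k * n) = 0 := by
    simp only [pow_mul]
    rw [geom_sum_eq (hom.pow_ne_one_of_pos_of_lt hk hkr), pow_right_comm, hom.pow_eq_one, one_pow,
      sub_self, zero_div]
  simp only [Tk, apply_om_pow_mul hf, ← Finset.sum_mul, hsum, zero_mul, mul_zero]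

theorem Dop_eq_Lop_of_invariant (hr : r ≠ 0) (hf : ∀ z, f (om r * z) = f z) (α : ℕ → ℝ) (x : ℂ) :
    Dop r α f x = Lop (acoef r α 0) f x := by
  have hsum : ∑ k ∈ Finset.range r, (acoef r α k : ℂ) * Tk r k f x = acoef r α 0 * f x := by
    rw [Finset.sum_eq_single_of_mem 0 (Finset.mem_range.2 (Nat.pos_of_ne_zero hr)),
      Tk_zero_of_invariant hr hf]
    intro k hk hk0
    rw [Tk_eq_zero_of_invariant hf hk0 (Finset.mem_range.1 hk), mul_zero]
  rw [Dop, Lop, hsum]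
  ring

end RotationInvariant

/-- The coefficient of `z ^ (n * r)` in the power series of `jmu r α`. It is kept real, and it is
`0` by the convention on division when some `(α_i + 1)_n` with `i < r` vanishes. -/
def besselCoeff (r : ℕ) (α : ℕ → ℝ) (n : ℕ) : ℝ :=
  (-1) ^ n / ((∏ i ∈ Finset.range r, poch (α i + 1) n) * r ^ (n * r))

theorem jmu_eq_tsum_besselCoeff (r : ℕ) (α : ℕ → ℝ) (z : ℂ) :
    jmu r α z = ∑' n, (besselCoeff r α n : ℂ) * z ^ (n * r) := by
  refine tsum_congr fun n ↦ ?_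
  rw [besselCoeff]
  push_cast
  ring

theorem besselCoeff_succ (r : ℕ) (α : ℕ → ℝ) (n : ℕ) :
    besselCoeff r α (n + 1) =
      besselCoeff r α n * (-((r : ℝ) ^ r)⁻¹ * ∏ i ∈ Finset.range r, (α i + 1 + n)⁻¹) := by
  simp only [besselCoeff, poch_succ, Finset.prod_mul_distrib, Finset.prod_inv_distrib,
    Nat.succ_mul, pow_add, pow_one, div_eq_mul_inv, mul_inv]
  ring

theorem tendsto_prod_inv_add_natCast {r : ℕ} (hr : r ≠ 0) (β : ℕ → ℝ) :
    Tendsto (fun n : ℕ ↦ ∏ i ∈ Finset.range r, (β i + n)⁻¹) atTop (𝓝 0) := by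
  have hfactor (i : ℕ) : Tendsto (fun n : ℕ ↦ (β i + n)⁻¹) atTop (𝓝 0) :=
    tendsto_inv_atTop_zero.comp (tendsto_atTop_add_const_left _ _ tendsto_natCast_atTop_atTop)
  simpa [hr] using tendsto_finsetProd (Finset.range r) fun i _ ↦ hfactor i

theorem hasSum_jmu {r : ℕ} (hr : r ≠ 0) (α : ℕ → ℝ) (z : ℂ) :
    HasSum (fun n ↦ (besselCoeff r α n : ℂ) * z ^ (n * r)) (jmu r α z) := by
  rw [jmu_eq_tsum_besselCoeff]
  let ρ (n : ℕ) : ℝ := -((r : ℝ) ^ r)⁻¹ * ∏ i ∈ Finset.range r, (α i + 1 + n)⁻¹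
  have hρ : Tendsto ρ atTop (𝓝 0) := by
    simpa only [mul_zero] using
      (tendsto_prod_inv_add_natCast hr fun i ↦ α i + 1).const_mul (-((r : ℝ) ^ r)⁻¹)
  have hρz : Tendsto (fun n ↦ (ρ n : ℂ) * z ^ r) atTop (𝓝 0) := by
    simpa using ((Complex.continuous_ofReal.tendsto 0).comp hρ).mul_const (z ^ r)
  refine (summable_of_succ_eq_mul_of_tendsto_zero (fun n ↦ ?_) hρz).hasSum
  rw [besselCoeff_succ, Complex.ofReal_mul, Nat.succ_mul, pow_add]
  ring

theorem jmu_om_mul {r : ℕ} (hr : r ≠ 0) (α : ℕ → ℝ) (z : ℂ) :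
    jmu r α (om r * z) = jmu r α z := by
  simp only [jmu, mul_pow, pow_mul', (isPrimitiveRoot_om hr).pow_eq_one, one_mul]

theorem add_mul_besselCoeff {r : ℕ} {α : ℕ → ℝ} {i : ℕ} (hi : i < r)
    (hα : ∀ n : ℕ, α i ≠ -n) (n : ℕ) :
    (α i + n) * besselCoeff r α n =
      α i * besselCoeff r (Function.update α i (α i - 1)) n := by
  let P := ∏ k ∈ (Finset.range r).erase i, poch (α k + 1) n
  have hprod : ∏ k ∈ Finset.range r, poch (α k + 1) n = poch (α i + 1) n * P :=
    (Finset.mul_prod_erase _ _ (Finset.mem_range.2 hi)).symm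
  have hprod_update : ∏ k ∈ Finset.range r, poch (Function.update α i (α i - 1) k + 1) n =
      poch (α i) n * P := by
    rw [← Finset.mul_prod_erase _ _ (Finset.mem_range.2 hi), Function.update_self, sub_add_cancel]
    congr 1
    refine Finset.prod_congr rfl fun k hk ↦ ?_
    rw [Function.update_of_ne (Finset.ne_of_mem_erase hk)]
  rw [besselCoeff, besselCoeff, hprod, hprod_update]
  calc (α i + n) * ((-1) ^ n / (poch (α i + 1) n * P * r ^ (n * r)))
      = (α i + n) / poch (α i + 1) n * ((-1) ^ n / (P * r ^ (n * r))) := by ring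
    _ = α i / poch (α i) n * ((-1) ^ n / (P * r ^ (n * r))) := by rw [add_div_poch_add_one hα]
    _ = α i * ((-1) ^ n / (poch (α i) n * P * r ^ (n * r))) := by ring

theorem mul_deriv_jmu_add {r : ℕ} {α : ℕ → ℝ} {i : ℕ} (hi : i < r)
    (hα : ∀ n : ℕ, α i ≠ -n) (x : ℂ) :
    x * deriv (jmu r α) x + r * α i * jmu r α x =
      r * α i * jmu r (Function.update α i (α i - 1)) x := by
  have hr : r ≠ 0 := Nat.ne_zero_of_lt hi
  have hleft := (hasSum_mul_deriv_of_hasSum_pow (hasSum_jmu hr α) x).add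
    ((hasSum_jmu hr α x).mul_left (r * α i : ℂ))
  have hright := (hasSum_jmu hr (Function.update α i (α i - 1)) x).mul_left (r * α i : ℂ)
  refine hleft.unique (hright.congr_fun fun n ↦ ?_)
  have hcoeff : ((α i : ℂ) + n) * besselCoeff r α n =
      α i * besselCoeff r (Function.update α i (α i - 1)) n :=
    mod_cast add_mul_besselCoeff hi hα n
  push_cast
  linear_combination (r * x ^ (n * r) : ℂ) * hcoeff

theorem stmt3 (r : ℕ) (hr : 2 ≤ r) (α : ℕ → ℝ)
    (hα0 : ∀ n : ℕ, α 0 ≠ -(n : ℝ))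
    (hα : ∀ i, 1 ≤ i → i < r → ∀ n : ℕ, α i ≠ -((n : ℝ) + 1)) :
    ∀ x : ℂ, x ≠ 0 →
      Dop r α (jmu r α) x =
        (r : ℂ) * (α 0 : ℝ) / x * jmu r (Function.update α 0 (α 0 - 1)) x := by
  intro x hx
  have hr0 : r ≠ 0 := by omega
  have hacoef : (acoef r α 0 : ℂ) = r * α 0 := by simp [acoef]
  calc Dop r α (jmu r α) x
      = deriv (jmu r α) x + r * α 0 / x * jmu r α x := by
        rw [Dop_eq_Lop_of_invariant hr0 (jmu_om_mul hr0 α), Lop, hacoef]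
    _ = (x * deriv (jmu r α) x + r * α 0 * jmu r α x) / x := by field_simp
    _ = r * α 0 / x * jmu r (Function.update α 0 (α 0 - 1)) x := by
        rw [mul_deriv_jmu_add (Nat.pos_of_ne_zero hr0) hα0, mul_div_right_comm]
end
end

section
/- Let r be a positive integer, 0 < α < 1, and let g : [0,∞) → ℂ be continuous. Then for every t > 0, the function F(t) = ∫_0^t (R_α g)(x) (t^r − x^r)^{−α} x^{αr} dx is differentiable at t and (r/(Γ(α) Γ(1−α))) F'(t) = g(t). In other words, the operator g ↦ (r/(Γ(α)Γ(1−α))) (d/dt) ∫_0^t g(x)(t^r−x^r)^{−α} x^{αr} dx is a left inverse of R_α. -/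
open Complex MeasureTheory Real Filter Topology

noncomputable section

/-!
In the variable `x ^ r` the operator `R_a` is, up to a power of `x`, an Abel fractional integral:
`x ^ (a r) R_a g(x) = x ^ (r - 1) ∫₀ˣ (x ^ r - u ^ r) ^ (a - 1) g(u) du`. Integrating this against
`(s ^ r - x ^ r) ^ (b - 1)` and exchanging the order of integration over the triangle
`0 < u < x < s`, the inner integral becomes a Beta integral after the substitution `y = x ^ r`,
which gives `B(a, b) / r ∫₀ˢ (s ^ r - u ^ r) ^ (a + b - 1) g(u) du`. For `b = 1 - a` the weight
disappears and the constant is `Γ(a) Γ(1 - a) / r`, so the result is the fundamental theorem of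
calculus for `g`.
-/

section Triangle

variable {E : Type*} [NormedAddCommGroup E] {a b : ℝ}

/-- The open triangle `a < u < x < b` in the plane of points `(x, u)`: the domain on which the order
of integration is exchanged. -/
def triangle (a b : ℝ) : Set (ℝ × ℝ) := {p | a < p.2 ∧ p.2 < p.1 ∧ p.1 < b}

lemma measurableSet_triangle : MeasurableSet (triangle a b) :=
  (measurableSet_lt measurable_const measurable_snd).inter
    ((measurableSet_lt measurable_snd measurable_fst).inter
      (measurableSet_lt measurable_fst measurable_const))

lemma triangle_subset_univ_prod_Ioo : triangle a b ⊆ Set.univ ×ˢ Set.Ioo a b :=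
  fun _ hp => ⟨trivial, hp.1, hp.2.1.trans hp.2.2⟩

lemma triangle_indicator_eq_indicator_snd (f : ℝ × ℝ → E) (x u : ℝ) :
    (triangle a b).indicator f (x, u) =
      (Set.Ioo a b).indicator (fun u => (Set.Ioo u b).indicator (fun x => f (x, u)) x) u := by
  simp only [triangle, Set.indicator, Set.mem_ofPred_eq, Set.mem_Ioo]
  grind

lemma triangle_indicator_eq_indicator_fst (f : ℝ × ℝ → E) (x u : ℝ) :
    (triangle a b).indicator f (x, u) =
      (Set.Ioo a b).indicator (fun x => (Set.Ioo a x).indicator (fun u => f (x, u)) u) x := by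
  simp only [triangle, Set.indicator, Set.mem_ofPred_eq, Set.mem_Ioo]
  grind

lemma integrableOn_triangle_iff {f : ℝ × ℝ → E}
    (hf : AEStronglyMeasurable f (volume.restrict (triangle a b))) :
    IntegrableOn f (triangle a b) ↔
      (∀ᵐ u ∂volume.restrict (Set.Ioo a b), IntegrableOn (fun x => f (x, u)) (Set.Ioo u b)) ∧
        IntegrableOn (fun u => ∫ x in Set.Ioo u b, ‖f (x, u)‖) (Set.Ioo a b) := by
  rw [← integrable_indicator_iff measurableSet_triangle, Measure.volume_eq_prod,
    integrable_prod_iff' ((aestronglyMeasurable_indicator_iff measurableSet_triangle).2 hf)]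
  refine and_congr ?_ ?_
  · rw [ae_restrict_iff' measurableSet_Ioo]
    refine eventually_congr (Eventually.of_forall fun u => ?_)
    simp only [triangle_indicator_eq_indicator_snd]
    by_cases hu : u ∈ Set.Ioo a b
    · simp [hu, integrable_indicator_iff measurableSet_Ioo]
    · simp [hu]
  · rw [← integrable_indicator_iff measurableSet_Ioo]
    refine integrable_congr (Eventually.of_forall fun u => ?_)
    simp only [triangle_indicator_eq_indicator_snd]
    by_cases hu : u ∈ Set.Ioo a b
    · simp [hu, norm_indicator_eq_indicator_norm, integral_indicator measurableSet_Ioo]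
    · simp [hu]

lemma integral_integral_triangle_swap [NormedSpace ℝ E] {f : ℝ × ℝ → E} (hab : a ≤ b)
    (hf : IntegrableOn f (triangle a b)) :
    ∫ x in a..b, ∫ u in a..x, f (x, u) = ∫ u in a..b, ∫ x in u..b, f (x, u) := by
  have hswap := integral_integral_swap (f := fun x u => (triangle a b).indicator f (x, u))
    ((integrable_indicator_iff measurableSet_triangle).2 hf)
  have hinner_u : ∀ x, ∫ u, (triangle a b).indicator f (x, u) =
      (Set.Ioo a b).indicator (fun x => ∫ u in a..x, f (x, u)) x := by
    intro x
    simp only [triangle_indicator_eq_indicator_fst]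
    by_cases hx : x ∈ Set.Ioo a b
    · simp [hx, integral_indicator measurableSet_Ioo, intervalIntegral.integral_of_le hx.1.le,
        integral_Ioc_eq_integral_Ioo]
    · simp [hx]
  have hinner_x : ∀ u, ∫ x, (triangle a b).indicator f (x, u) =
      (Set.Ioo a b).indicator (fun u => ∫ x in u..b, f (x, u)) u := by
    intro u
    simp only [triangle_indicator_eq_indicator_snd]
    by_cases hu : u ∈ Set.Ioo a b
    · simp [hu, integral_indicator measurableSet_Ioo, intervalIntegral.integral_of_le hu.2.le,
        integral_Ioc_eq_integral_Ioo]
    · simp [hu]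
  simpa only [hinner_u, hinner_x, integral_indicator measurableSet_Ioo,
    intervalIntegral.integral_of_le hab, integral_Ioc_eq_integral_Ioo] using hswap

section Kernel

variable [NormedSpace ℝ E] {k : ℝ → ℝ → ℝ} {g : ℝ → E}

lemma aestronglyMeasurable_triangle_smul (hk : Measurable (Function.uncurry k))
    (hg : AEStronglyMeasurable g (volume.restrict (Set.Ioo a b))) :
    AEStronglyMeasurable (fun p : ℝ × ℝ => k p.1 p.2 • g p.2)
      (volume.restrict (triangle a b)) := by
  have hg_strip : AEStronglyMeasurable (fun p : ℝ × ℝ => g p.2)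
      (volume.restrict (Set.univ ×ˢ Set.Ioo a b)) := by
    rw [Measure.volume_eq_prod, ← Measure.prod_restrict]
    exact hg.comp_snd
  exact hk.aestronglyMeasurable.smul
    (hg_strip.mono_measure (Measure.restrict_mono_set _ triangle_subset_univ_prod_Ioo))

lemma integrableOn_triangle_smul (hk_meas : Measurable (Function.uncurry k))
    (hk_nonneg : ∀ u ∈ Set.Ioo a b, ∀ x ∈ Set.Ioo u b, 0 ≤ k x u)
    (hk_int : ∀ u ∈ Set.Ioo a b, IntegrableOn (k · u) (Set.Ioo u b))
    (hg : AEStronglyMeasurable g (volume.restrict (Set.Ioo a b)))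
    (hkg : IntegrableOn (fun u => (∫ x in Set.Ioo u b, k x u) • g u) (Set.Ioo a b)) :
    IntegrableOn (fun p : ℝ × ℝ => k p.1 p.2 • g p.2) (triangle a b) := by
  refine (integrableOn_triangle_iff (aestronglyMeasurable_triangle_smul hk_meas hg)).2 ⟨?_, ?_⟩
  · filter_upwards [ae_restrict_mem measurableSet_Ioo] with u hu
    exact Integrable.smul_const (hk_int u hu) (g u)
  · have hnorm : ∀ u ∈ Set.Ioo a b, ‖(∫ x in Set.Ioo u b, k x u) • g u‖ =
        ∫ x in Set.Ioo u b, ‖k x u • g u‖ := by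
      intro u hu
      rw [norm_smul, Real.norm_of_nonneg (setIntegral_nonneg measurableSet_Ioo (hk_nonneg u hu)),
        ← integral_mul_const]
      refine setIntegral_congr_fun measurableSet_Ioo fun x hx => ?_
      rw [norm_smul, Real.norm_of_nonneg (hk_nonneg u hu x hx)]
    exact IntegrableOn.congr_fun (Integrable.norm hkg) hnorm measurableSet_Ioo

lemma integral_integral_smul_swap [CompleteSpace E] (hab : a ≤ b)
    (hk_meas : Measurable (Function.uncurry k))
    (hk_nonneg : ∀ u ∈ Set.Ioo a b, ∀ x ∈ Set.Ioo u b, 0 ≤ k x u)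
    (hk_int : ∀ u ∈ Set.Ioo a b, IntervalIntegrable (k · u) volume u b)
    (hg : AEStronglyMeasurable g (volume.restrict (Set.Ioo a b)))
    (hkg : IntervalIntegrable (fun u => (∫ x in u..b, k x u) • g u) volume a b) :
    ∫ x in a..b, ∫ u in a..x, k x u • g u = ∫ u in a..b, (∫ x in u..b, k x u) • g u := by
  have hkg_Ioo : IntegrableOn (fun u => (∫ x in Set.Ioo u b, k x u) • g u) (Set.Ioo a b) := by
    refine ((intervalIntegrable_iff_integrableOn_Ioo_of_le hab).1 hkg).congr_fun
      (fun u hu => ?_) measurableSet_Ioo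
    simp only [intervalIntegral.integral_of_le hu.2.le, integral_Ioc_eq_integral_Ioo]
  have hint := integrableOn_triangle_smul hk_meas hk_nonneg
    (fun u hu => (intervalIntegrable_iff_integrableOn_Ioo_of_le hu.2.le).1 (hk_int u hu)) hg hkg_Ioo
  simpa only [intervalIntegral.integral_smul_const] using integral_integral_triangle_swap hab hint

end Kernel

end Triangle

section Beta

variable {a b : ℝ}

lemma integral_rpow_mul_sub_rpow (ha : 0 < a) (hb : 0 < b) {c : ℝ} (hc : 0 < c) :
    ∫ x in (0 : ℝ)..c, x ^ (a - 1) * (c - x) ^ (b - 1) =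
      c ^ (a + b - 1) * ProbabilityTheory.beta a b := by
  have hscaled := Complex.betaIntegral_scaled a b hc
  rw [Complex.betaIntegral_eq_Gamma_mul_div _ _ (by simpa) (by simpa)] at hscaled
  have hcast : ∀ x ∈ Set.uIcc 0 c, (x : ℂ) ^ ((a : ℂ) - 1) * ((c : ℂ) - x) ^ ((b : ℂ) - 1) =
      ((x ^ (a - 1) * (c - x) ^ (b - 1) : ℝ) : ℂ) := by
    intro x hx
    rw [Set.uIcc_of_le hc.le] at hx
    simp [Complex.ofReal_cpow hx.1, Complex.ofReal_cpow (sub_nonneg.2 hx.2)]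
  rw [intervalIntegral.integral_congr hcast, intervalIntegral.integral_ofReal,
    ← Complex.ofReal_add, Complex.Gamma_ofReal, Complex.Gamma_ofReal, Complex.Gamma_ofReal,
    ← Complex.ofReal_one, ← Complex.ofReal_sub, ← Complex.ofReal_cpow hc.le] at hscaled
  exact_mod_cast hscaled

variable {φ φ' : ℝ → ℝ} {u s : ℝ}

lemma integral_deriv_mul_rpow_mul_rpow (ha : 0 < a) (hb : 0 < b)
    (hφ : ContinuousOn φ (Set.uIcc u s))
    (hφ' : ∀ x ∈ Set.Ioo (min u s) (max u s), HasDerivAt φ (φ' x) x)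
    (hφ'_nonneg : ∀ x ∈ Set.Ioo (min u s) (max u s), 0 ≤ φ' x) (hus : φ u < φ s) :
    ∫ x in u..s, φ' x * ((φ s - φ x) ^ (b - 1) * (φ x - φ u) ^ (a - 1)) =
      (φ s - φ u) ^ (a + b - 1) * ProbabilityTheory.beta a b := by
  calc ∫ x in u..s, φ' x * ((φ s - φ x) ^ (b - 1) * (φ x - φ u) ^ (a - 1))
      = ∫ x in u..s,
          ((fun y => (y - φ u) ^ (a - 1) * (φ s - φ u - (y - φ u)) ^ (b - 1)) ∘ φ) x * φ' x := by
        congr 1 with x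
        simp only [Function.comp_apply, sub_sub_sub_cancel_right]
        ring
    _ = ∫ y in (0 : ℝ)..(φ s - φ u), y ^ (a - 1) * (φ s - φ u - y) ^ (b - 1) := by
        rw [intervalIntegral.integral_comp_mul_deriv_of_deriv_nonneg hφ hφ' hφ'_nonneg,
          intervalIntegral.integral_comp_sub_right
            (fun y => y ^ (a - 1) * (φ s - φ u - y) ^ (b - 1)), sub_self]
    _ = _ := integral_rpow_mul_sub_rpow ha hb (sub_pos.2 hus)

end Beta

section RiemannLiouville

variable {r : ℕ} {a b : ℝ} {s u x : ℝ} {g : ℝ → ℂ}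

/-- The kernel in `(x, u)` of the composition of the fractional integrals of orders `b` and `a` with
respect to `x ↦ x ^ r`, the outer one being evaluated at `s`. -/
def powBetaKernel (r : ℕ) (a b s x u : ℝ) : ℝ :=
  x ^ (r - 1) * ((s ^ r - x ^ r) ^ (b - 1) * (x ^ r - u ^ r) ^ (a - 1))

lemma measurable_powBetaKernel : Measurable (Function.uncurry (powBetaKernel r a b s)) := by
  unfold powBetaKernel
  fun_prop

lemma powBetaKernel_nonneg (hu : 0 ≤ u) (hux : u ≤ x) (hxs : x ≤ s) :
    0 ≤ powBetaKernel r a b s x u := by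
  have hx : 0 ≤ x := hu.trans hux
  have hur : u ^ r ≤ x ^ r := by gcongr
  have hxr : x ^ r ≤ s ^ r := by gcongr
  exact mul_nonneg (pow_nonneg hx _)
    (mul_nonneg (Real.rpow_nonneg (sub_nonneg.2 hxr) _) (Real.rpow_nonneg (sub_nonneg.2 hur) _))

lemma integral_powBetaKernel (hr : 0 < r) (ha : 0 < a) (hb : 0 < b) (hu : 0 ≤ u) (hus : u < s) :
    ∫ x in u..s, powBetaKernel r a b s x u =
      (s ^ r - u ^ r) ^ (a + b - 1) * (ProbabilityTheory.beta a b / r) := by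
  have hsubst := integral_deriv_mul_rpow_mul_rpow (φ := (· ^ r)) (φ' := fun x => r * x ^ (r - 1))
    ha hb (continuous_pow r).continuousOn (fun x _ => hasDerivAt_pow r x)
    (fun x hx => by
      have : 0 ≤ x := (le_min hu (hu.trans hus.le)).trans hx.1.le
      positivity)
    (pow_lt_pow_left₀ hus hu hr.ne')
  simp only [mul_assoc, intervalIntegral.integral_const_mul] at hsubst
  rw [mul_div_assoc', ← hsubst]
  simp only [powBetaKernel]
  field_simp

lemma intervalIntegrable_powBetaKernel (hr : 0 < r) (ha : 0 < a) (hb : 0 < b) (hu : 0 ≤ u)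
    (hus : u < s) : IntervalIntegrable (powBetaKernel r a b s · u) volume u s := by
  -- The Bochner integral of a non-integrable function is `0`, so a nonzero value suffices.
  apply intervalIntegral.intervalIntegrable_of_integral_ne_zero
  rw [integral_powBetaKernel hr ha hb hu hus]
  have hpow : 0 < s ^ r - u ^ r := sub_pos.2 (pow_lt_pow_left₀ hus hu hr.ne')
  have hbeta := ProbabilityTheory.beta_pos ha hb
  positivity

lemma Rop_eq_rpow_smul_integral (hx : 0 < x) :
    Rop r a g x =
      x ^ (-1 - r * (a - 1)) • ∫ u in (0 : ℝ)..x, (x ^ r - u ^ r) ^ (a - 1) • g u := by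
  have hscale : ∀ t ∈ Set.uIcc (0 : ℝ) 1, g (x * t) * (((1 - t ^ r) ^ (a - 1) : ℝ) : ℂ) =
      x ^ (-(r * (a - 1))) • (x ^ r - (x * t) ^ r) ^ (a - 1) • g (x * t) := by
    intro t ht
    rw [Set.uIcc_of_le zero_le_one] at ht
    have ht1 : 0 ≤ 1 - t ^ r := sub_nonneg.2 (pow_le_one₀ ht.1 ht.2)
    rw [mul_pow, ← mul_one_sub, Real.mul_rpow (by positivity) ht1, ← Real.rpow_natCast_mul hx.le,
      smul_smul, ← mul_assoc, ← Real.rpow_add hx, neg_add_cancel, Real.rpow_zero, one_mul,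
      Complex.real_smul, mul_comm]
  rw [Rop, intervalIntegral.integral_congr hscale, intervalIntegral.integral_smul,
    intervalIntegral.integral_comp_mul_left (fun u => (x ^ r - u ^ r) ^ (a - 1) • g u) hx.ne',
    mul_zero, mul_one, smul_smul, ← Real.rpow_neg_one, ← Real.rpow_add hx, neg_add_eq_sub,
    sub_eq_add_neg (-1), add_comm]

lemma Rop_mul_rpow_eq_integral_powBetaKernel (hr : 0 < r) (hx : 0 < x) :
    Rop r a g x * (((s ^ r - x ^ r) ^ (b - 1) * x ^ (a * r) : ℝ) : ℂ) =
      ∫ u in (0 : ℝ)..x, powBetaKernel r a b s x u • g u := by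
  have hexp : x ^ (a * r) * x ^ (-1 - r * (a - 1)) = x ^ (r - 1) := by
    rw [← Real.rpow_add hx, ← Real.rpow_natCast, Nat.cast_pred hr]
    ring_nf
  rw [Rop_eq_rpow_smul_integral hx, mul_comm, ← Complex.real_smul, smul_smul, mul_assoc, hexp,
    ← intervalIntegral.integral_smul]
  simp only [powBetaKernel, smul_smul]
  congr 1 with u
  ring_nf

lemma aestronglyMeasurable_of_intervalIntegrable_rpow_smul {c : ℝ} (hr : 0 < r) (hs : 0 ≤ s)
    (hg : IntervalIntegrable (fun u => (s ^ r - u ^ r) ^ c • g u) volume 0 s) :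
    AEStronglyMeasurable g (volume.restrict (Set.Ioo 0 s)) := by
  have hinv : Measurable fun u : ℝ => ((s ^ r - u ^ r) ^ c)⁻¹ := by fun_prop
  refine (hinv.aestronglyMeasurable.smul
    ((intervalIntegrable_iff_integrableOn_Ioo_of_le hs).1 hg).aestronglyMeasurable).congr ?_
  filter_upwards [ae_restrict_mem measurableSet_Ioo] with u hu
  have hpow : 0 < s ^ r - u ^ r := sub_pos.2 (pow_lt_pow_left₀ hu.2 hu.1.le hr.ne')
  exact inv_smul_smul₀ (Real.rpow_pos_of_pos hpow c).ne' (g u)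

lemma integral_Rop_mul_rpow (hr : 0 < r) (ha : 0 < a) (hb : 0 < b) (hs : 0 ≤ s)
    (hg : IntervalIntegrable (fun u => (s ^ r - u ^ r) ^ (a + b - 1) • g u) volume 0 s) :
    ∫ x in (0 : ℝ)..s, Rop r a g x * (((s ^ r - x ^ r) ^ (b - 1) * x ^ (a * r) : ℝ) : ℂ) =
      (ProbabilityTheory.beta a b / r) •
        ∫ u in (0 : ℝ)..s, (s ^ r - u ^ r) ^ (a + b - 1) • g u := by
  have hinner : Set.EqOn
      (fun u => (ProbabilityTheory.beta a b / r) • (s ^ r - u ^ r) ^ (a + b - 1) • g u)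
      (fun u => (∫ x in u..s, powBetaKernel r a b s x u) • g u) (Set.Ioo 0 s) := fun u hu => by
    simp only [integral_powBetaKernel hr ha hb hu.1.le hu.2, smul_smul, mul_comm]
  calc ∫ x in (0 : ℝ)..s, Rop r a g x * (((s ^ r - x ^ r) ^ (b - 1) * x ^ (a * r) : ℝ) : ℂ)
      = ∫ x in (0 : ℝ)..s, ∫ u in (0 : ℝ)..x, powBetaKernel r a b s x u • g u :=
        intervalIntegral.integral_congr_Ioo_of_le hs fun x hx =>
          Rop_mul_rpow_eq_integral_powBetaKernel hr hx.1
    _ = ∫ u in (0 : ℝ)..s, (∫ x in u..s, powBetaKernel r a b s x u) • g u :=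
        integral_integral_smul_swap hs measurable_powBetaKernel
          (fun u hu x hx => powBetaKernel_nonneg hu.1.le hx.1.le hx.2.le)
          (fun u hu => intervalIntegrable_powBetaKernel hr ha hb hu.1.le hu.2)
          (aestronglyMeasurable_of_intervalIntegrable_rpow_smul hr hs hg)
          ((hg.smul (ProbabilityTheory.beta a b / r)).congr_uIoo (Set.uIoo_of_le hs ▸ hinner))
    _ = ∫ u in (0 : ℝ)..s,
          (ProbabilityTheory.beta a b / r) • (s ^ r - u ^ r) ^ (a + b - 1) • g u :=
        (intervalIntegral.integral_congr_Ioo_of_le hs hinner).symm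
    _ = _ := intervalIntegral.integral_smul _ _

lemma integral_Rop_mul_rpow_neg (hr : 0 < r) (ha0 : 0 < a) (ha1 : a < 1) (hs : 0 ≤ s)
    (hg : IntervalIntegrable g volume 0 s) :
    ∫ x in (0 : ℝ)..s, Rop r a g x * (((s ^ r - x ^ r) ^ (-a) * x ^ (a * r) : ℝ) : ℂ) =
      (Real.Gamma a * Real.Gamma (1 - a) / r) • ∫ u in (0 : ℝ)..s, g u := by
  have hcomp := integral_Rop_mul_rpow (b := 1 - a) (g := g) hr ha0 (sub_pos.2 ha1) hs
  simpa [ProbabilityTheory.beta, hg] using hcomp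

end RiemannLiouville

theorem stmt8_general {r : ℕ} (hr : 0 < r) {a : ℝ} (ha0 : 0 < a) (ha1 : a < 1) {g : ℝ → ℂ}
    {t T : ℝ} (ht : 0 < t) (htT : t < T) (hg : IntervalIntegrable g volume 0 T)
    (hgt : ContinuousAt g t) :
    ∃ d : ℂ,
      HasDerivAt
        (fun s : ℝ => ∫ x in (0 : ℝ)..s,
          Rop r a g x * (((s ^ r - x ^ r) ^ (-a) * x ^ (a * r) : ℝ) : ℂ)) d t ∧
      ((r / (Real.Gamma a * Real.Gamma (1 - a)) : ℝ) : ℂ) * d = g t := by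
  have hg_sub : ∀ s ∈ Set.Ioo 0 T, IntervalIntegrable g volume 0 s := fun s hs =>
    hg.mono_set (Set.uIcc_subset_uIcc_left (Set.mem_uIcc_of_le hs.1.le hs.2.le))
  have hderiv : HasDerivAt (fun s => ∫ u in (0 : ℝ)..s, g u) (g t) t := by
    refine intervalIntegral.integral_hasDerivAt_right (hg_sub t ⟨ht, htT⟩) ?_ hgt
    exact ⟨Set.Ioc 0 T, Ioc_mem_nhds ht htT, hg.1.aestronglyMeasurable⟩
  refine ⟨(Real.Gamma a * Real.Gamma (1 - a) / r) • g t,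
    (hderiv.const_smul _).congr_of_eventuallyEq ?_, ?_⟩
  · filter_upwards [Ioo_mem_nhds ht htT] with s hs
    exact integral_Rop_mul_rpow_neg hr ha0 ha1 hs.1.le (hg_sub s hs)
  · have hΓ : Real.Gamma a * Real.Gamma (1 - a) ≠ 0 :=
      (mul_pos (Real.Gamma_pos_of_pos ha0) (Real.Gamma_pos_of_pos (sub_pos.2 ha1))).ne'
    rw [← Complex.real_smul, smul_smul, div_mul_div_cancel₀ hΓ,
      div_self (Nat.cast_ne_zero.2 hr.ne'), one_smul]

theorem stmt8 (r : ℕ) (hr : 0 < r) (a : ℝ) (ha0 : 0 < a) (ha1 : a < 1)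
    (g : ℝ → ℂ) (hg : ContinuousOn g (Set.Ici 0)) :
    ∀ t : ℝ, 0 < t → ∃ d : ℂ,
      HasDerivAt
        (fun s : ℝ => ∫ x in (0:ℝ)..s, Rop r a g x * (((s ^ r - x ^ r) ^ (-a) * x ^ (a * r) : ℝ) : ℂ)) d t ∧
      ((r / (Real.Gamma a * Real.Gamma (1 - a)) : ℝ) : ℂ) * d = g t := by
  intro t ht
  have hg_int : IntervalIntegrable g volume 0 (t + 1) :=
    (hg.mono Set.Icc_subset_Ici_self).intervalIntegrable_of_Icc (by positivity)
  exact stmt8_general hr ha0 ha1 ht (lt_add_one t) hg_int (hg.continuousAt (Ici_mem_nhds ht))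
end
end

section
/- Let r be a positive integer, k ≥ 0 an integer, and let g : [0,∞) → ℂ be continuous. Let M be the operator (M h)(x) = (1/(r x^{r−1})) h'(x) and set F(x) = ∫_0^x g(u)(x^r − u^r)^k du. Then for every x > 0, (r/k!) · x^{r−1} · (M^{k+1} F)(x) = g(x). -/
open Complex MeasureTheory Real Filter Topology

noncomputable section

/-! Substituting `y = φ x`, here `φ x = x ^ r`, turns `M` into `d/dy`. Each application of `M` to
`∫ u in 0..x, (φ x - φ u) ^ k • g u` lowers the exponent by one and produces the factor `k`, because
the kernel vanishes on the diagonal. After `k` steps only `k! • ∫ u in 0..x, g u` is left, and the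
last step is the fundamental theorem of calculus. -/

section Integrability

variable {E : Type*} [NormedAddCommGroup E] {g : ℝ → E} {a s : ℝ}

theorem exists_intervalIntegrable_around (hg : ∀ᶠ t in 𝓝 s, IntervalIntegrable g volume a t) :
    ∃ b c, s ∈ Set.Ioo b c ∧ IntervalIntegrable g volume b c := by
  obtain ⟨l, u, hs, hlu⟩ := mem_nhds_iff_exists_Ioo_subset.mp hg
  obtain ⟨b, hb⟩ := exists_between hs.1
  obtain ⟨c, hc⟩ := exists_between hs.2
  exact ⟨b, c, ⟨hb.2, hc.1⟩,
    (hlu ⟨hb.1, hb.2.trans hs.2⟩).symm.trans (hlu ⟨hs.1.trans hc.1, hc.2⟩)⟩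

theorem stronglyMeasurableAtFilter_of_eventually_intervalIntegrable
    (hg : ∀ᶠ t in 𝓝 s, IntervalIntegrable g volume a t) :
    StronglyMeasurableAtFilter g (𝓝 s) := by
  obtain ⟨b, c, hs, hbc⟩ := exists_intervalIntegrable_around hg
  exact ⟨Set.Ioc b c, Ioc_mem_nhds hs.1 hs.2, hbc.1.aestronglyMeasurable⟩

end Integrability

section PowKernelIntegral

variable {E : Type*} [NormedAddCommGroup E] [NormedSpace ℝ E]
  {φ : ℝ → ℝ} {g f h : ℝ → E} {a s x φ' : ℝ}

/-- The derivative `dh/dφ = h' / φ'` of `h` with respect to the function `φ`. It takes the junk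
value `0` where `φ'` vanishes or `h` is not differentiable. -/
def relDeriv (φ : ℝ → ℝ) (h : ℝ → E) (x : ℝ) : E := (deriv φ x)⁻¹ • deriv h x

/-- The integral of `g` from `a` against the kernel `(φ s - φ u) ^ k`. It is the Riemann–Liouville
integral of order `k + 1` of `g / φ'` with respect to `φ`, without the normalization `1 / k!`. -/
def powKernelIntegral (φ : ℝ → ℝ) (a : ℝ) (k : ℕ) (g : ℝ → E) (s : ℝ) : E :=
  ∫ u in a..s, (φ s - φ u) ^ k • g u

theorem relDeriv_congr_eventuallyEq (φ : ℝ → ℝ) (hfh : f =ᶠ[𝓝 x] h) :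
    relDeriv φ f =ᶠ[𝓝 x] relDeriv φ h :=
  (EventuallyEq.rfl (f := fun t => (deriv φ t)⁻¹)).smul hfh.deriv

theorem iterate_relDeriv_congr (φ : ℝ → ℝ) (n : ℕ) (hfh : f =ᶠ[𝓝 x] h) :
    (relDeriv φ)^[n] f x = (relDeriv φ)^[n] h x := by
  induction n generalizing f h with
  | zero => exact hfh.eq_of_nhds
  | succ _ ih => exact ih (relDeriv_congr_eventuallyEq φ hfh)

theorem relDeriv_const_smul (φ : ℝ → ℝ) (c : ℝ) (h : ℝ → E) :
    relDeriv φ (c • h) = c • relDeriv φ h := by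
  ext x
  simp only [relDeriv, Pi.smul_apply, deriv_const_smul_field, smul_comm c]

theorem iterate_relDeriv_const_smul (φ : ℝ → ℝ) (n : ℕ) (c : ℝ) (h : ℝ → E) :
    (relDeriv φ)^[n] (c • h) = c • (relDeriv φ)^[n] h :=
  Function.Commute.iterate_left (g := (c • ·)) (relDeriv_const_smul φ c) n h

theorem tendsto_intervalIntegral_nhds_self
    (hg : ∀ᶠ t in 𝓝 s, IntervalIntegrable g volume a t) :
    Tendsto (fun t => ∫ u in s..t, g u) (𝓝 s) (𝓝 0) := by
  obtain ⟨b, c, hs, hbc⟩ := exists_intervalIntegrable_around hg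
  have hs_mem : s ∈ Set.uIcc b c := Set.Icc_subset_uIcc (Set.Ioo_subset_Icc_self hs)
  have hcont : ContinuousAt (fun t => ∫ u in s..t, g u) s :=
    (intervalIntegral.continuousOn_primitive_interval' hbc hs_mem).continuousAt
      (mem_of_superset (Icc_mem_nhds hs.1 hs.2) Set.Icc_subset_uIcc)
  simpa only [ContinuousAt, intervalIntegral.integral_same] using hcont

theorem exists_eventually_forall_uIcc_abs_sub_le (hφ : DifferentiableAt ℝ φ s) :
    ∃ C ≥ 0, ∀ᶠ t in 𝓝 s, ∀ u ∈ Set.uIcc s t, |φ t - φ u| ≤ C * |t - s| := by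
  obtain ⟨C, hC_pos, hC⟩ := hφ.isBigO_sub.exists_pos
  have hC_uIcc : ∀ᶠ t in 𝓝 s, ∀ u ∈ Set.uIcc s t, |φ u - φ s| ≤ C * |u - s| :=
    (tendsto_const_nhds.uIcc tendsto_id).eventually (eventually_smallSets_forall.mpr hC.bound)
  refine ⟨2 * C, by positivity, hC_uIcc.mono fun t ht u hu => ?_⟩
  have hus : |u - s| ≤ |t - s| := Set.abs_sub_left_of_mem_uIcc hu
  calc |φ t - φ u| ≤ |φ t - φ s| + |φ s - φ u| := abs_sub_le _ _ _
    _ = |φ t - φ s| + |φ u - φ s| := by rw [abs_sub_comm (φ s)]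
    _ ≤ C * |t - s| + C * |t - s| :=
        add_le_add (ht t Set.right_mem_uIcc) ((ht u hu).trans (by gcongr))
    _ = 2 * C * |t - s| := by ring

theorem hasDerivAt_intervalIntegral_sub_smul_self (hφ : DifferentiableAt ℝ φ s)
    (hg : ∀ᶠ t in 𝓝 s, IntervalIntegrable g volume a t) :
    HasDerivAt (fun t => ∫ u in s..t, (φ t - φ u) • g u) 0 s := by
  obtain ⟨C, hC_nonneg, hC⟩ := exists_eventually_forall_uIcc_abs_sub_le hφ
  have hbound : ∀ᶠ t in 𝓝 s, ‖∫ u in s..t, (φ t - φ u) • g u‖ ≤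
      C * ‖(t - s) * ∫ u in s..t, ‖g u‖‖ := by
    filter_upwards [hC, hg] with t hCt hgt
    have hgst : IntervalIntegrable g volume s t := hg.self_of_nhds.symm.trans hgt
    have hle : ∀ u ∈ Set.uIoc s t, ‖(φ t - φ u) • g u‖ ≤ C * |t - s| * ‖g u‖ := fun u hu => by
      rw [norm_smul]
      gcongr
      exact hCt u (Set.uIoc_subset_uIcc hu)
    calc ‖∫ u in s..t, (φ t - φ u) • g u‖ ≤ |∫ u in s..t, C * |t - s| * ‖g u‖| :=
          intervalIntegral.norm_integral_le_abs_of_norm_le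
            ((ae_restrict_iff' measurableSet_uIoc).mpr (ae_of_all _ hle)) (hgst.norm.const_mul _)
      _ = C * ‖(t - s) * ∫ u in s..t, ‖g u‖‖ := by
          rw [intervalIntegral.integral_const_mul, norm_mul, abs_mul, abs_mul, abs_abs,
            abs_of_nonneg hC_nonneg, mul_assoc, norm_eq_abs, norm_eq_abs]
  have hlittle : (fun t => (t - s) * ∫ u in s..t, ‖g u‖) =o[𝓝 s] fun t => t - s := by
    simpa only [mul_one] using (Asymptotics.isBigO_refl (fun t => t - s) (𝓝 s)).mul_isLittleO
      ((Asymptotics.isLittleO_one_iff ℝ).mpr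
        (tendsto_intervalIntegral_nhds_self (hg.mono fun _ => IntervalIntegrable.norm)))
  rw [hasDerivAt_iff_isLittleO]
  simpa using (Asymptotics.IsBigO.of_bound C hbound).trans_isLittleO hlittle

theorem powKernelIntegral_zero (φ : ℝ → ℝ) (a : ℝ) (g : ℝ → E) :
    powKernelIntegral φ a 0 g = fun s => ∫ u in a..s, g u := by
  ext s
  simp only [powKernelIntegral, pow_zero, one_smul]

theorem powKernelIntegral_succ (hφ : Continuous φ) (k : ℕ)
    (hg : IntervalIntegrable g volume a s) :
    powKernelIntegral φ a (k + 1) g s =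
      φ s • powKernelIntegral φ a k g s - powKernelIntegral φ a k (φ • g) s := by
  have hint : ∀ ψ : ℝ → ℝ, Continuous ψ → IntervalIntegrable (fun u => ψ u • g u) volume a s :=
    fun ψ hψ => hg.continuousOn_smul hψ.continuousOn
  rw [powKernelIntegral, powKernelIntegral, powKernelIntegral, ← intervalIntegral.integral_smul,
    ← intervalIntegral.integral_sub]
  · congr with u
    simp only [Pi.smul_apply']
    module
  · exact (hint (fun u => (φ s - φ u) ^ k) (by fun_prop)).smul (φ s)
  · simpa only [Pi.smul_apply', smul_smul] using
      hint (fun u => (φ s - φ u) ^ k * φ u) (by fun_prop)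

theorem hasDerivAt_powKernelIntegral_one (hφ : Continuous φ) (hφ' : HasDerivAt φ φ' s)
    (hg : ∀ᶠ t in 𝓝 s, IntervalIntegrable g volume a t) :
    HasDerivAt (powKernelIntegral φ a 1 g) (φ' • powKernelIntegral φ a 0 g s) s := by
  have hgs : IntervalIntegrable g volume a s := hg.self_of_nhds
  have hφg : IntervalIntegrable (fun u => φ u • g u) volume a s :=
    hgs.continuousOn_smul hφ.continuousOn
  have hsplit : powKernelIntegral φ a 1 g =ᶠ[𝓝 s] fun t =>
      (φ t • ∫ u in a..s, g u) - (∫ u in a..s, φ u • g u) + ∫ u in s..t, (φ t - φ u) • g u := by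
    filter_upwards [hg] with t hgt
    have hint : ∀ {b c}, IntervalIntegrable g volume b c →
        IntervalIntegrable (fun u => (φ t - φ u) • g u) volume b c :=
      fun hbc => hbc.continuousOn_smul (by fun_prop)
    have hφt : IntervalIntegrable (fun u => φ t • g u) volume a s := hgs.smul (φ t)
    rw [← intervalIntegral.integral_smul, ← intervalIntegral.integral_sub hφt hφg]
    simp only [powKernelIntegral, pow_one, ← sub_smul]
    exact (intervalIntegral.integral_add_adjacent_intervals (hint hgs)
      (hint (hgs.symm.trans hgt))).symm
  rw [powKernelIntegral_zero]
  have hremainder := hasDerivAt_intervalIntegral_sub_smul_self hφ'.differentiableAt hg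
  simpa only [add_zero] using
    (((hφ'.smul_const _).sub_const _).add hremainder).congr_of_eventuallyEq hsplit

theorem hasDerivAt_powKernelIntegral_succ (hφ : Continuous φ) (hφ' : HasDerivAt φ φ' s) (k : ℕ)
    (hg : ∀ᶠ t in 𝓝 s, IntervalIntegrable g volume a t) :
    HasDerivAt (powKernelIntegral φ a (k + 1) g)
      (((k + 1 : ℝ) * φ') • powKernelIntegral φ a k g s) s := by
  induction k generalizing g with
  | zero => simpa using hasDerivAt_powKernelIntegral_one hφ hφ' hg
  | succ k ih =>
    have hφg : ∀ᶠ t in 𝓝 s, IntervalIntegrable (φ • g) volume a t :=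
      hg.mono fun t hgt => hgt.continuousOn_smul hφ.continuousOn
    have hrec := hg.mono fun t => powKernelIntegral_succ hφ (k + 1)
    refine (((hφ'.smul (ih hg)).sub (ih hφg)).congr_of_eventuallyEq hrec).congr_deriv ?_
    rw [powKernelIntegral_succ hφ k hg.self_of_nhds]
    push_cast
    module

theorem relDeriv_powKernelIntegral_succ (hφ : Continuous φ) (hφ' : deriv φ s ≠ 0) (k : ℕ)
    (hg : ∀ᶠ t in 𝓝 s, IntervalIntegrable g volume a t) :
    relDeriv φ (powKernelIntegral φ a (k + 1) g) s =
      ((k + 1 : ℝ) • powKernelIntegral φ a k g) s := by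
  have hφ_deriv := (differentiableAt_of_deriv_ne_zero hφ').hasDerivAt
  rw [relDeriv, (hasDerivAt_powKernelIntegral_succ hφ hφ_deriv k hg).deriv, smul_smul,
    Pi.smul_apply, mul_comm, mul_inv_cancel_right₀ hφ']

theorem relDeriv_powKernelIntegral_zero [CompleteSpace E] (φ : ℝ → ℝ)
    (hg : ∀ᶠ t in 𝓝 x, IntervalIntegrable g volume a t) (hgx : ContinuousAt g x) :
    relDeriv φ (powKernelIntegral φ a 0 g) x = (deriv φ x)⁻¹ • g x := by
  rw [relDeriv, powKernelIntegral_zero, intervalIntegral.deriv_integral_right hg.self_of_nhds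
    (stronglyMeasurableAtFilter_of_eventually_intervalIntegrable hg) hgx]

theorem iterate_relDeriv_powKernelIntegral [CompleteSpace E] (hφ : Continuous φ)
    (hφ' : ∀ᶠ t in 𝓝 x, deriv φ t ≠ 0) (k : ℕ)
    (hg : ∀ᶠ t in 𝓝 x, IntervalIntegrable g volume a t) (hgx : ContinuousAt g x) :
    (relDeriv φ)^[k + 1] (powKernelIntegral φ a k g) x =
      ((k.factorial : ℝ) * (deriv φ x)⁻¹) • g x := by
  induction k with
  | zero => simpa using relDeriv_powKernelIntegral_zero φ hg hgx
  | succ k ih =>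
    have hstep : relDeriv φ (powKernelIntegral φ a (k + 1) g) =ᶠ[𝓝 x]
        (k + 1 : ℝ) • powKernelIntegral φ a k g := by
      filter_upwards [hφ', hg.eventually_nhds] with s hφs hgs
      exact relDeriv_powKernelIntegral_succ hφ hφs k hgs
    rw [Function.iterate_succ_apply, iterate_relDeriv_congr φ (k + 1) hstep,
      iterate_relDeriv_const_smul, Pi.smul_apply, ih, smul_smul, Nat.factorial_succ]
    push_cast
    rw [mul_assoc]

end PowKernelIntegral

theorem Mop_eq_relDeriv_pow (r : ℕ) : Mop r = relDeriv (· ^ r) := by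
  ext h x
  rw [Mop, relDeriv, deriv_pow_field, one_div, Complex.real_smul]

theorem stmt10_general (r : ℕ) (hr : 0 < r) (k : ℕ)
    (g : ℝ → ℂ) (hg : LocallyIntegrableOn g (Set.Ici 0))
    (x : ℝ) (hx : 0 < x) (hgx : ContinuousAt g x) :
    ((r / (Nat.factorial k) : ℝ) : ℂ) * ((x ^ (r - 1) : ℝ) : ℂ) *
        (Mop r)^[k + 1]
          (fun s : ℝ => ∫ u in (0:ℝ)..s, g u * (((s ^ r - u ^ r) ^ k : ℝ) : ℂ)) x
      = g x := by
  have hderiv : ∀ t : ℝ, deriv (· ^ r) t = r * t ^ (r - 1) := fun t => deriv_pow_field r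
  have hderiv_ne : ∀ t : ℝ, 0 < t → deriv (· ^ r) t ≠ 0 := fun t ht => by
    rw [hderiv]; positivity
  have hint : ∀ t : ℝ, 0 < t → IntervalIntegrable g volume 0 t := fun t ht =>
    (hg.integrableOn_compact_subset (Set.uIcc_of_le ht.le ▸ Set.Icc_subset_Ici_self)
      isCompact_uIcc).intervalIntegrable
  have hkernel : (fun s : ℝ => ∫ u in (0:ℝ)..s, g u * (((s ^ r - u ^ r) ^ k : ℝ) : ℂ)) =
      powKernelIntegral (· ^ r) 0 k g := by
    ext s
    simp only [powKernelIntegral, Complex.real_smul, mul_comm]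
  rw [hkernel, Mop_eq_relDeriv_pow, iterate_relDeriv_powKernelIntegral (continuous_pow r)
    ((eventually_gt_nhds hx).mono hderiv_ne) k ((eventually_gt_nhds hx).mono hint) hgx,
    ← Complex.ofReal_mul, ← Complex.real_smul, smul_smul, hderiv]
  have hscalar : (r / k.factorial * x ^ (r - 1) * (k.factorial * (r * x ^ (r - 1))⁻¹) : ℝ) = 1 := by
    field_simp
  rw [hscalar, one_smul]

theorem stmt10 (r : ℕ) (hr : 0 < r) (k : ℕ)
    (g : ℝ → ℂ) (hg : ContinuousOn g (Set.Ici 0)) :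
    ∀ x : ℝ, 0 < x →
      ((r / (Nat.factorial k) : ℝ) : ℂ) * ((x ^ (r - 1) : ℝ) : ℂ) *
          (Mop r)^[k + 1]
            (fun s : ℝ => ∫ u in (0:ℝ)..s, g u * (((s ^ r - u ^ r) ^ k : ℝ) : ℂ)) x
        = g x := fun x hx =>
  stmt10_general r hr k g (hg.locallyIntegrableOn measurableSet_Ici) x hx
    (hg.continuousAt (Ici_mem_nhds hx))
end
end

section
/- Let a > 0, α > 0, and let f, g : ℂ → ℂ be such that for each m ∈ {0,…,r−1} the function (x,u) ↦ f(ω^m u) conj(g(ω^m x)) (x^r − u^r)^{α−1} x^{a−1−r(α−1)} is absolutely integrable over the region {(x,u) : 0 < u < x < ∞}. Then ⟨R_α f, g⟩_a = ⟨f, R_α^* g⟩_a, where R_α^* g(z) = ∫_1^∞ g(zt)(t^r − 1)^{α−1} t^{a−1−r(α−1)} dt. -/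
open Complex MeasureTheory Real Filter Topology

noncomputable section

/-!
On the ray through `w`, both pairings are iterated integrals over the wedge `0 < u < x` of
`f (w u) * conj (g (w x)) * k x u`, where
`k x u = (x ^ r - u ^ r) ^ (b - 1) * x ^ (a - 1 - r (b - 1))`
is homogeneous of degree `a - 1`. Integrating in `u` first and substituting `u = x t` pulls out
`x * x ^ (a - 1) = x ^ a` and leaves `k 1 t`, the kernel of `R_b`; integrating in `x` first and
substituting `x = u t` pulls out `u ^ a` and leaves `k t 1`, the kernel of the adjoint. Fubini's
theorem identifies the two.
-/

section Wedge

variable {E : Type*} [NormedAddCommGroup E] [NormedSpace ℝ E] {Φ : ℝ × ℝ → E}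

/-- The open sector `0 < u < x` of points `(x, u)` in the plane, the domain of the double integral
computing both pairings. -/
def wedge : Set (ℝ × ℝ) := {p | 0 < p.2 ∧ p.2 < p.1}

theorem measurableSet_wedge : MeasurableSet wedge :=
  (measurableSet_lt measurable_const measurable_snd).inter
    (measurableSet_lt measurable_snd measurable_fst)

theorem integral_indicator_wedge_fst (Φ : ℝ × ℝ → E) (x : ℝ) :
    ∫ u, wedge.indicator Φ (x, u) =
      (Set.Ioi 0).indicator (fun x ↦ x • ∫ t in (0 : ℝ)..1, Φ (x, x * t)) x := by
  have slice : (fun u ↦ wedge.indicator Φ (x, u)) =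
      (Set.Ioo 0 x).indicator (fun u ↦ Φ (x, u)) := by
    ext u
    simp [wedge, Set.indicator_apply]
  rw [slice, integral_indicator measurableSet_Ioo]
  by_cases hx : 0 < x
  · rw [Set.indicator_of_mem (Set.mem_Ioi.2 hx),
      intervalIntegral.smul_integral_comp_mul_left (fun u ↦ Φ (x, u)), mul_zero, mul_one,
      intervalIntegral.integral_of_le hx.le, integral_Ioc_eq_integral_Ioo]
  · simp [hx]

theorem integral_indicator_wedge_snd (Φ : ℝ × ℝ → E) (u : ℝ) :
    ∫ x, wedge.indicator Φ (x, u) =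
      (Set.Ioi 0).indicator (fun u ↦ u • ∫ t in Set.Ioi (1 : ℝ), Φ (u * t, u)) u := by
  by_cases hu : 0 < u
  · have slice : (fun x ↦ wedge.indicator Φ (x, u)) =
        (Set.Ioi u).indicator (fun x ↦ Φ (x, u)) := by
      ext x
      simp [wedge, Set.indicator_apply, hu]
    rw [slice, integral_indicator measurableSet_Ioi, Set.indicator_of_mem (Set.mem_Ioi.2 hu),
      integral_comp_mul_left_Ioi' (fun x ↦ Φ (x, u)) 1 hu, mul_one]
  · simp [wedge, hu]

theorem integrableOn_smul_integral_wedge_fst (hΦ : IntegrableOn Φ wedge) :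
    IntegrableOn (fun x : ℝ ↦ x • ∫ t in (0 : ℝ)..1, Φ (x, x * t)) (Set.Ioi 0) := by
  rw [← integrable_indicator_iff measurableSet_Ioi]
  simpa only [integral_indicator_wedge_fst] using
    (hΦ.integrable_indicator measurableSet_wedge).integral_prod_left

theorem integrableOn_smul_integral_wedge_snd (hΦ : IntegrableOn Φ wedge) :
    IntegrableOn (fun u : ℝ ↦ u • ∫ t in Set.Ioi (1 : ℝ), Φ (u * t, u)) (Set.Ioi 0) := by
  rw [← integrable_indicator_iff measurableSet_Ioi]
  simpa only [integral_indicator_wedge_snd] using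
    (hΦ.integrable_indicator measurableSet_wedge).integral_prod_right

theorem integral_smul_integral_wedge_swap (hΦ : IntegrableOn Φ wedge) :
    ∫ x in Set.Ioi (0 : ℝ), x • ∫ t in (0 : ℝ)..1, Φ (x, x * t) =
      ∫ u in Set.Ioi (0 : ℝ), u • ∫ t in Set.Ioi (1 : ℝ), Φ (u * t, u) := by
  rw [← integral_indicator measurableSet_Ioi, ← integral_indicator measurableSet_Ioi]
  simpa only [integral_indicator_wedge_fst, integral_indicator_wedge_snd] using
    integral_integral_swap (f := fun x u ↦ wedge.indicator Φ (x, u))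
      (hΦ.integrable_indicator measurableSet_wedge)

end Wedge

/-- The Riemann–Liouville kernel on the wedge `0 < u < x`, normalized by a power of `x` so that it
is homogeneous of degree `a - 1`. -/
def rlKernel (r : ℕ) (a b x u : ℝ) : ℝ :=
  (x ^ r - u ^ r) ^ (b - 1) * x ^ (a - 1 - r * (b - 1))

theorem rlKernel_mul_mul (r : ℕ) (a b : ℝ) {c x u : ℝ} (hc : 0 < c) (hu : 0 ≤ u) (hux : u ≤ x) :
    rlKernel r a b (c * x) (c * u) = c ^ (a - 1) * rlKernel r a b x u := by
  have hpow : 0 ≤ x ^ r - u ^ r := sub_nonneg.2 (pow_le_pow_left₀ hu hux r)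
  have hexp : c ^ (a - 1) = (c ^ r) ^ (b - 1) * c ^ (a - 1 - r * (b - 1)) := by
    rw [← rpow_natCast, ← rpow_mul hc.le, ← rpow_add hc, add_sub_cancel]
  rw [rlKernel, rlKernel, mul_pow, mul_pow, ← mul_sub, mul_rpow (pow_nonneg hc.le r) hpow,
    mul_rpow hc.le (hu.trans hux), hexp]
  ring

theorem mul_rlKernel_mul_mul (r : ℕ) (a b : ℝ) {c x u : ℝ} (hc : 0 < c) (hu : 0 ≤ u)
    (hux : u ≤ x) : c * rlKernel r a b (c * x) (c * u) = rlKernel r a b x u * c ^ a := by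
  rw [rlKernel_mul_mul r a b hc hu hux, rpow_sub_one hc.ne']
  field_simp

/-- The adjoint `R_b^*` of the `r`-Riemann–Liouville operator `RopC r b` for the pairing
`inr r a`. -/
def RopCAdjoint (r : ℕ) (a b : ℝ) (g : ℂ → ℂ) (z : ℂ) : ℂ :=
  ∫ t in Set.Ioi (1:ℝ),
    g (z * t) * ((((t ^ r - 1) ^ (b - 1) * t ^ (a - 1 - r * (b - 1))) : ℝ) : ℂ)

/-- The integrand on `wedge` whose two iterated integrals are the contributions of the ray through
`w` to `⟨R_b f, g⟩_a` and `⟨f, R_b^* g⟩_a`. -/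
def rayIntegrand (r : ℕ) (a b : ℝ) (f g : ℂ → ℂ) (w : ℂ) (p : ℝ × ℝ) : ℂ :=
  f (w * p.2) * (starRingEnd ℂ) (g (w * p.1)) * (rlKernel r a b p.1 p.2 : ℂ)

theorem smul_rayIntegrand_mul_mul (r : ℕ) (a b : ℝ) (f g : ℂ → ℂ) (w : ℂ) {c x u : ℝ}
    (hc : 0 < c) (hu : 0 ≤ u) (hux : u ≤ x) :
    c • rayIntegrand r a b f g w (c * x, c * u) =
      f (w * c * u) * (starRingEnd ℂ) (g (w * c * x)) * (rlKernel r a b x u : ℂ) *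
        ((c ^ a : ℝ) : ℂ) := by
  have hK : (c : ℂ) * rlKernel r a b (c * x) (c * u) = rlKernel r a b x u * ((c ^ a : ℝ) : ℂ) :=
    mod_cast mul_rlKernel_mul_mul r a b hc hu hux
  simp only [rayIntegrand, real_smul, ofReal_mul, ← mul_assoc w]
  linear_combination f (w * c * u) * (starRingEnd ℂ) (g (w * c * x)) * hK

section Ray

variable {r : ℕ} {a b : ℝ} {f g : ℂ → ℂ} {w : ℂ}

theorem smul_integral_rayIntegrand_fst {x : ℝ} (hx : 0 < x) :
    x • ∫ t in (0 : ℝ)..1, rayIntegrand r a b f g w (x, x * t) =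
      RopC r b f (w * x) * (starRingEnd ℂ) (g (w * x)) * ((x ^ a : ℝ) : ℂ) := by
  rw [RopC, ← intervalIntegral.integral_smul, ← intervalIntegral.integral_mul_const,
    ← intervalIntegral.integral_mul_const]
  refine intervalIntegral.integral_congr fun t ht ↦ ?_
  rw [Set.uIcc_of_le zero_le_one] at ht
  have homogeneity := smul_rayIntegrand_mul_mul r a b f g w hx ht.1 ht.2
  simp only [mul_one, ofReal_one, rlKernel, one_pow, one_rpow] at homogeneity
  simp only [homogeneity]
  ring

theorem smul_integral_rayIntegrand_snd {u : ℝ} (hu : 0 < u) :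
    u • ∫ t in Set.Ioi (1 : ℝ), rayIntegrand r a b f g w (u * t, u) =
      f (w * u) * (starRingEnd ℂ) (RopCAdjoint r a b g (w * u)) * ((u ^ a : ℝ) : ℂ) := by
  rw [RopCAdjoint, ← integral_smul, ← integral_conj, ← integral_const_mul, ← integral_mul_const]
  refine setIntegral_congr_fun measurableSet_Ioi fun t ht ↦ ?_
  have homogeneity := smul_rayIntegrand_mul_mul r a b f g w hu zero_le_one (Set.mem_Ioi.1 ht).le
  simp only [mul_one, ofReal_one, rlKernel, one_pow] at homogeneity
  simp only [homogeneity, map_mul, conj_ofReal]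
  ring

theorem integrableOn_RopC_mul_conj (h : IntegrableOn (rayIntegrand r a b f g w) wedge) :
    IntegrableOn (fun x : ℝ ↦
      RopC r b f (w * x) * (starRingEnd ℂ) (g (w * x)) * ((x ^ a : ℝ) : ℂ)) (Set.Ioi 0) :=
  (integrableOn_smul_integral_wedge_fst h).congr_fun
    (fun _ hx ↦ smul_integral_rayIntegrand_fst hx) measurableSet_Ioi

theorem integrableOn_mul_conj_RopCAdjoint (h : IntegrableOn (rayIntegrand r a b f g w) wedge) :
    IntegrableOn (fun u : ℝ ↦
      f (w * u) * (starRingEnd ℂ) (RopCAdjoint r a b g (w * u)) * ((u ^ a : ℝ) : ℂ))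
      (Set.Ioi 0) :=
  (integrableOn_smul_integral_wedge_snd h).congr_fun
    (fun _ hu ↦ smul_integral_rayIntegrand_snd hu) measurableSet_Ioi

theorem integral_RopC_mul_conj_eq (h : IntegrableOn (rayIntegrand r a b f g w) wedge) :
    ∫ x in Set.Ioi (0 : ℝ),
        RopC r b f (w * x) * (starRingEnd ℂ) (g (w * x)) * ((x ^ a : ℝ) : ℂ) =
      ∫ u in Set.Ioi (0 : ℝ),
        f (w * u) * (starRingEnd ℂ) (RopCAdjoint r a b g (w * u)) * ((u ^ a : ℝ) : ℂ) :=
  calc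
    _ = ∫ x in Set.Ioi (0 : ℝ), x • ∫ t in (0 : ℝ)..1, rayIntegrand r a b f g w (x, x * t) :=
      setIntegral_congr_fun measurableSet_Ioi fun _ hx ↦ (smul_integral_rayIntegrand_fst hx).symm
    _ = ∫ u in Set.Ioi (0 : ℝ), u • ∫ t in Set.Ioi (1 : ℝ), rayIntegrand r a b f g w (u * t, u) :=
      integral_smul_integral_wedge_swap h
    _ = _ := setIntegral_congr_fun measurableSet_Ioi fun _ hu ↦ smul_integral_rayIntegrand_snd hu

end Ray

theorem inr_eq_sum_integral {r : ℕ} {a : ℝ} {f g : ℂ → ℂ}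
    (h : ∀ m < r, IntegrableOn (fun t : ℝ ↦
      f (om r ^ m * t) * (starRingEnd ℂ) (g (om r ^ m * t)) * ((t ^ a : ℝ) : ℂ)) (Set.Ioi 0)) :
    inr r a f g = ∑ m ∈ Finset.range r, ∫ t in Set.Ioi (0 : ℝ),
      f (om r ^ m * t) * (starRingEnd ℂ) (g (om r ^ m * t)) * ((t ^ a : ℝ) : ℂ) := by
  simp only [inr, Finset.sum_mul]
  exact integral_finsetSum _ fun m hm ↦ h m (Finset.mem_range.1 hm)

theorem stmt14_general (r : ℕ) (a b : ℝ) (f g : ℂ → ℂ)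
    (hint : ∀ m < r, IntegrableOn (rayIntegrand r a b f g (om r ^ m)) wedge) :
    inr r a (RopC r b f) g = inr r a f (RopCAdjoint r a b g) := by
  rw [inr_eq_sum_integral fun m hm ↦ integrableOn_RopC_mul_conj (hint m hm),
    inr_eq_sum_integral fun m hm ↦ integrableOn_mul_conj_RopCAdjoint (hint m hm)]
  exact Finset.sum_congr rfl fun m hm ↦ integral_RopC_mul_conj_eq (hint m (Finset.mem_range.1 hm))

theorem stmt14 (r : ℕ) (hr : 2 ≤ r) (a b : ℝ) (ha : 0 < a) (hb : 0 < b) (f g : ℂ → ℂ)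
    (hint : ∀ m < r,
      IntegrableOn
        (fun p : ℝ × ℝ =>
          f (om r ^ m * p.2) * (starRingEnd ℂ) (g (om r ^ m * p.1)) *
            ((((p.1 ^ r - p.2 ^ r) ^ (b - 1) * p.1 ^ (a - 1 - r * (b - 1))) : ℝ) : ℂ))
        {p : ℝ × ℝ | 0 < p.2 ∧ p.2 < p.1}) :
    inr r a (RopC r b f) g =
      inr r a f
        (fun z => ∫ t in Set.Ioi (1:ℝ),
          g (z * t) * ((((t ^ r - 1) ^ (b - 1) * t ^ (a - 1 - r * (b - 1))) : ℝ) : ℂ)) :=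
  stmt14_general r a b f g hint
end
end

section
/- Let f : ℂ → ℂ be complex differentiable on ℂ∖{0}, a ∈ ℝ, and k ≥ 0 an integer. Then L_a(T_k f)(x) = T_{k+1}(L_a f)(x) for all x ∈ ℂ∖{0}. Consequently, if f is r-times complex differentiable on ℂ∖{0}, then Δ_μ(T_k f)(x) = T_k(Δ_μ f)(x) for all x ∈ ℂ∖{0}, where indices of T are taken modulo r. -/
open Complex MeasureTheory Real Filter Topology

noncomputable section

/-!
Differentiating `x ↦ f (ωⁿ x)` and dividing `f (ωⁿ x)` by `x` rather than by `ωⁿ x` both produce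
one extra factor `ωⁿ`, so each of the two terms of `L_a` raises the index of `T_k` by one. The
`r`-fold composition `Δ_μ` thus turns `T_k` into `T_{k+r}`, which is `T_k` because `ω ^ r = 1`. All
intermediate functions stay differentiable because holomorphic functions have holomorphic
derivatives.
-/

section RootOfUnity

variable (r : ℕ)

theorem om_pow_self : om r ^ r = 1 := by
  rcases eq_or_ne r 0 with rfl | hr
  · exact pow_zero _
  · exact (Complex.isPrimitiveRoot_exp r hr).pow_eq_one

theorem om_ne_zero : om r ≠ 0 := Complex.exp_ne_zero _

theorem mapsTo_om_mul_compl_zero : Set.MapsTo (om r * ·) {(0 : ℂ)}ᶜ {(0 : ℂ)}ᶜ :=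
  fun _ hx => mul_ne_zero (om_ne_zero r) hx

variable {r} in
theorem om_pow_mul_mem {U : Set ℂ} (hω : Set.MapsTo (om r * ·) U U) (n : ℕ) {x : ℂ}
    (hx : x ∈ U) : om r ^ n * x ∈ U := by
  simpa only [mul_left_iterate] using hω.iterate n hx

end RootOfUnity

section Projector

variable (r k : ℕ) (f g : ℂ → ℂ)

theorem Tk_index_add_self : Tk r (k + r) f = Tk r k f := by
  funext x
  simp only [Tk, add_mul, pow_add, pow_mul (om r) r, om_pow_self, one_pow, mul_one]

theorem Tk_fun_add (x : ℂ) : Tk r k (fun y => f y + g y) x = Tk r k f x + Tk r k g x := by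
  simp only [Tk, mul_add, Finset.sum_add_distrib]

theorem div_mul_Tk (c x : ℂ) :
    c / x * Tk r k f x = Tk r (k + 1) (fun y => c / y * f y) x := by
  simp only [Tk, Finset.mul_sum]
  refine Finset.sum_congr rfl fun n _ => ?_
  have hω : om r ^ n ≠ 0 := pow_ne_zero n (om_ne_zero r)
  rw [add_one_mul, pow_add]
  field_simp

variable {r f} in
theorem hasDerivAt_Tk {f' : ℂ → ℂ} {x : ℂ}
    (hf : ∀ n < r, HasDerivAt f (f' (om r ^ n * x)) (om r ^ n * x)) :
    HasDerivAt (Tk r k f) (Tk r (k + 1) f' x) x := by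
  have hterm (n : ℕ) (hn : n ∈ Finset.range r) :
      HasDerivAt (fun y => om r ^ (k * n) * f (om r ^ n * y))
        (om r ^ ((k + 1) * n) * f' (om r ^ n * x)) x := by
    have hrot : HasDerivAt (om r ^ n * ·) (om r ^ n) x := hasDerivAt_const_mul _
    refine (((hf n (Finset.mem_range.mp hn)).comp x hrot).const_mul _).congr_deriv ?_
    ring
  exact (HasDerivAt.fun_sum hterm).const_mul _

end Projector

section FirstOrderOperator

variable (a : ℝ) {f g : ℂ → ℂ}

theorem Lop_Tk {r : ℕ} (k : ℕ) {x : ℂ}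
    (hf : ∀ n < r, DifferentiableAt ℂ f (om r ^ n * x)) :
    Lop a (Tk r k f) x = Tk r (k + 1) (Lop a f) x := by
  have hderiv : deriv (Tk r k f) x = Tk r (k + 1) (deriv f) x :=
    (hasDerivAt_Tk k fun n hn => (hf n hn).hasDerivAt).deriv
  calc Lop a (Tk r k f) x
      = Tk r (k + 1) (deriv f) x + Tk r (k + 1) (fun y => a / y * f y) x := by
        rw [Lop, hderiv, div_mul_Tk]
    _ = Tk r (k + 1) (Lop a f) x := (Tk_fun_add r (k + 1) _ _ x).symm

variable {U : Set ℂ}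

theorem differentiableOn_Lop (hU : IsOpen U) (h0 : 0 ∉ U) (hf : DifferentiableOn ℂ f U) :
    DifferentiableOn ℂ (Lop a f) U := by
  have hquot : DifferentiableOn ℂ (fun x : ℂ => (a : ℂ) / x) U :=
    (differentiableOn_const _).div differentiableOn_id fun _ hx => ne_of_mem_of_not_mem hx h0
  exact (hf.deriv hU).add (hquot.mul hf)

theorem eqOn_Lop (hU : IsOpen U) (hfg : Set.EqOn f g U) :
    Set.EqOn (Lop a f) (Lop a g) U := fun x hx => by
  rw [Lop, Lop, hfg.deriv hU hx, hfg hx]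

end FirstOrderOperator

section Composition

variable (r : ℕ) (α : ℕ → ℝ)

theorem Lcomp_succ (m : ℕ) (f : ℂ → ℂ) :
    Lcomp r α (m + 1) f = Lop (acoef r α m) (Lcomp r α m f) := by
  simp only [Lcomp, List.range_succ, List.foldl_append, List.foldl_cons, List.foldl_nil]

theorem Delta_eq_Lcomp : Delta r α = Lcomp r α r := rfl

variable {f : ℂ → ℂ} {U : Set ℂ}

theorem differentiableOn_Lcomp (hU : IsOpen U) (h0 : 0 ∉ U) (hf : DifferentiableOn ℂ f U)
    (m : ℕ) : DifferentiableOn ℂ (Lcomp r α m f) U := by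
  induction m with
  | zero => exact hf
  | succ m ih =>
    rw [Lcomp_succ]
    exact differentiableOn_Lop _ hU h0 ih

variable {r}

theorem eqOn_Lcomp_Tk (hU : IsOpen U) (h0 : 0 ∉ U) (hω : Set.MapsTo (om r * ·) U U)
    (hf : DifferentiableOn ℂ f U) (k m : ℕ) :
    Set.EqOn (Lcomp r α m (Tk r k f)) (Tk r (k + m) (Lcomp r α m f)) U := by
  induction m with
  | zero => exact Set.eqOn_refl _ U
  | succ m ih =>
    intro x hx
    have hdiff (n : ℕ) (_ : n < r) : DifferentiableAt ℂ (Lcomp r α m f) (om r ^ n * x) :=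
      (differentiableOn_Lcomp r α hU h0 hf m).differentiableAt
        (hU.mem_nhds (om_pow_mul_mem hω n hx))
    calc Lcomp r α (m + 1) (Tk r k f) x
        = Lop (acoef r α m) (Lcomp r α m (Tk r k f)) x := by rw [Lcomp_succ]
      _ = Lop (acoef r α m) (Tk r (k + m) (Lcomp r α m f)) x := eqOn_Lop _ hU ih hx
      _ = Tk r (k + (m + 1)) (Lop (acoef r α m) (Lcomp r α m f)) x := Lop_Tk _ _ hdiff
      _ = Tk r (k + (m + 1)) (Lcomp r α (m + 1) f) x := by rw [Lcomp_succ]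

theorem eqOn_Delta_Tk (hU : IsOpen U) (h0 : 0 ∉ U) (hω : Set.MapsTo (om r * ·) U U)
    (hf : DifferentiableOn ℂ f U) (k : ℕ) :
    Set.EqOn (Delta r α (Tk r k f)) (Tk r k (Delta r α f)) U := by
  have h := eqOn_Lcomp_Tk α hU h0 hω hf k r
  rwa [Tk_index_add_self, ← Delta_eq_Lcomp] at h

end Composition

theorem stmt17 (r : ℕ) (hr : 2 ≤ r) (α : ℕ → ℝ) (a : ℝ) (k : ℕ) (f : ℂ → ℂ)
    (hf : DifferentiableOn ℂ f {(0:ℂ)}ᶜ) :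
    (∀ x : ℂ, x ≠ 0 → Lop a (Tk r k f) x = Tk r (k + 1) (Lop a f) x) ∧
    (ContDiffOn ℂ r f {(0:ℂ)}ᶜ →
      ∀ x : ℂ, x ≠ 0 → Delta r α (Tk r k f) x = Tk r k (Delta r α f) x) := by
  have hU : IsOpen {(0 : ℂ)}ᶜ := isOpen_compl_singleton
  have h0 : (0 : ℂ) ∉ ({0}ᶜ : Set ℂ) := Set.notMem_compl_iff.mpr rfl
  have hω := mapsTo_om_mul_compl_zero r
  refine ⟨fun x hx => Lop_Tk a k fun n _ => ?_, fun _ x hx => eqOn_Delta_Tk α hU h0 hω hf k hx⟩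
  exact hf.differentiableAt (hU.mem_nhds (om_pow_mul_mem hω n hx))
end
end
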